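/- Proposition 2.6(ii) (average reciprocal characteristic polynomial for the product ensemble, residue form). For every z ∈ ℂ∖ℝ, ∫_{(0,∞)^N} ∏_{l=1}^N (z−x_l)^{−1} 𝒫_N(x₁,…,x_N) dx₁⋯dx_N = ((−1)^{N−1}/∏_{l=1}^r Γ(ν_l+N)) ∫₀^∞ (z−t)^{−1} ( ∑_{j=1}^N e^{−a_j} Φ(−a_j;t) ∏_{l≠j} (a_l−a_j)^{−1} ) dt. -/

import Mathlib

open MeasureTheory Filter Topology

noncomputable section


/-- Pochhammer symbol `(a)_j` over `ℝ`. -/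
def poch (a : ℝ) (j : ℕ) : ℝ := ∏ i ∈ Finset.range j, (a + i)

/-- The hypergeometric function `₀F₁(b; z)` for complex argument `z`. -/
def hyp0F1 (b : ℝ) (z : ℂ) : ℂ :=
  ∑' k : ℕ, (Real.Gamma b : ℂ) * z ^ k /
    ((Nat.factorial k : ℂ) * (Real.Gamma (b + k) : ℂ))

/-- The hypergeometric function `₀F₁(b; z)` for real argument `z`. -/
def hyp0F1R (b z : ℝ) : ℝ :=
  ∑' k : ℕ, Real.Gamma b * z ^ k / (Nat.factorial k * Real.Gamma (b + k))

/-- The terminating hypergeometric sum `₁F₁(-k; b; u)`. -/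
def hyp1F1T (k : ℕ) (b u : ℝ) : ℝ :=
  ∑ j ∈ Finset.range (k + 1),
    poch (-(k : ℝ)) j / (poch b j * Nat.factorial j) * u ^ j

/-- The function `Ψ(u;x)` of the paper. -/
def Psi (r ν0 : ℕ) (ν : Fin r → ℕ) (u x : ℝ) : ℝ :=
  (1 / Real.Gamma ((ν0 : ℝ) + 1)) *
    ∑' k : ℕ, x ^ k / Nat.factorial k * hyp1F1T k ((ν0 : ℝ) + 1) u *
      ∏ l, 1 / Real.Gamma ((ν l : ℝ) + 1 + k)

/-- The positive orthant in `ℝ^r`. -/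
def posOrth (r : ℕ) : Set (Fin r → ℝ) := {t | ∀ i, 0 < t i}

/-- The function `Φ(v;y)` of the paper, complex `v`. -/
def Phi (r ν0 : ℕ) (ν : Fin r → ℕ) (v : ℂ) (y : ℝ) : ℂ :=
  ((1 / Real.Gamma ((ν0 : ℝ) + 1) : ℝ) : ℂ) *
    ∫ t in posOrth r,
      (((∏ i, (t i) ^ ((ν i : ℝ) - 1) * Real.exp (-t i)) *
          (y / ∏ i, t i) ^ ν0 * Real.exp (-(y / ∏ i, t i)) : ℝ) : ℂ) *
        hyp0F1 ((ν0 : ℝ) + 1) (-(v * ((y / ∏ i, t i : ℝ) : ℂ)))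

/-- The function `Φ(v;y)` of the paper, real `v`. -/
def PhiR (r ν0 : ℕ) (ν : Fin r → ℕ) (v y : ℝ) : ℝ :=
  (1 / Real.Gamma ((ν0 : ℝ) + 1)) *
    ∫ t in posOrth r,
      ((∏ i, (t i) ^ ((ν i : ℝ) - 1) * Real.exp (-t i)) *
          (y / ∏ i, t i) ^ ν0 * Real.exp (-(y / ∏ i, t i))) *
        hyp0F1R ((ν0 : ℝ) + 1) (-(v * (y / ∏ i, t i)))

/-- The double-contour-integral correlation kernel `K_N(x,y)` of Proposition 2.1,
with `C` the counterclockwise circle of center `c` and radius `R`. -/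
def KN (r ν0 N : ℕ) (ν : Fin r → ℕ) (a : Fin N → ℝ) (c : ℂ) (R : ℝ) (x y : ℝ) : ℂ :=
  ∫ u in Set.Ioi (0 : ℝ),
    (2 * Real.pi * Complex.I)⁻¹ *
      ∮ v in C(c, R),
        (u : ℂ) ^ ν0 * Complex.exp (-(u : ℂ) + v) * ((Psi r ν0 ν u x : ℝ) : ℂ) *
          Phi r ν0 ν v y * ((u : ℂ) - v)⁻¹ * ∏ l, ((u : ℂ) + (a l : ℂ)) / (v + (a l : ℂ))

/-- An admissible contour for `K_N`: a counterclockwise circle contained in the left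
half-plane which encloses all the points `-a l`. -/
def AdmCircle (N : ℕ) (a : Fin N → ℝ) (c : ℂ) (R : ℝ) : Prop :=
  0 < R ∧ c.re + R < 0 ∧ ∀ l, ‖-(a l : ℂ) - c‖ < R

/-- The Meijer G-function `G^{1,0}_{0,r+2}(—;0,-ν₀,…,-ν_r | z)`, complex argument. -/
def G1 (r ν0 : ℕ) (ν : Fin r → ℕ) (z : ℂ) : ℂ :=
  ∑' k : ℕ, (-z) ^ k /
    ((Nat.factorial k : ℂ) * (Real.Gamma ((ν0 : ℝ) + 1 + k) : ℂ) *
      ∏ l, (Real.Gamma ((ν l : ℝ) + 1 + k) : ℂ))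

/-- The Meijer G-function `G^{1,0}_{0,r+2}(—;0,-ν₀,…,-ν_r | z)`, real argument. -/
def G1R (r ν0 : ℕ) (ν : Fin r → ℕ) (z : ℝ) : ℝ :=
  ∑' k : ℕ, (-z) ^ k /
    (Nat.factorial k * Real.Gamma ((ν0 : ℝ) + 1 + k) *
      ∏ l, Real.Gamma ((ν l : ℝ) + 1 + k))

/-- `g₀(w) = ∑ (-1)^k w^{ν₀+k}/(k! Γ(ν₀+k+1))`, complex argument. -/
def g0C (ν0 : ℕ) (w : ℂ) : ℂ :=
  ∑' k : ℕ, (-1 : ℂ) ^ k * w ^ (ν0 + k) /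
    ((Nat.factorial k : ℂ) * (Real.Gamma ((ν0 : ℝ) + k + 1) : ℂ))

/-- `g₀(w)`, real argument. -/
def g0R (ν0 : ℕ) (w : ℝ) : ℝ :=
  ∑' k : ℕ, (-1 : ℝ) ^ k * w ^ (ν0 + k) /
    (Nat.factorial k * Real.Gamma ((ν0 : ℝ) + k + 1))

/-- The Meijer G-function `G^{r+1,0}_{0,r+2}(—;ν₀,…,ν_r,0 | z)` for `z > 0`, real form. -/
def G2R (r ν0 : ℕ) (ν : Fin r → ℕ) (z : ℝ) : ℝ :=
  ∫ t in posOrth r,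
    (∏ l, (t l) ^ ((ν l : ℝ) - 1) * Real.exp (-t l)) * g0R ν0 (z / ∏ l, t l)

/-- The critical hard-edge kernel `𝒦^{h,r}(ξ,η;τ)` of Theorem 1.2, the inner integral
running up the imaginary axis `v = i t`. -/
def Kcrit (r ν0 : ℕ) (ν : Fin r → ℕ) (G2 : ℂ → ℂ) (τ ξ η : ℝ) : ℂ :=
  (2 * Real.pi * Complex.I)⁻¹ *
    ∫ u in Set.Ioi (0 : ℝ), ∫ t : ℝ,
      ((u : ℂ) / (Complex.I * t)) ^ ν0 *
        Complex.exp (-(τ : ℂ) * u - (u : ℂ) ^ 2 / 2 + (τ : ℂ) * (Complex.I * t) +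
          (Complex.I * t) ^ 2 / 2) *
        ((u : ℂ) - Complex.I * t)⁻¹ * G1 r ν0 ν ((u * ξ : ℝ) : ℂ) *
        G2 (Complex.I * t * (η : ℂ)) * Complex.I

/-- The deformed critical kernel `𝒦^{h,r}_m(ξ,η;τ,σ)` of Theorem 1.3, the inner integral
running up the vertical line `Re v = -c`. -/
def KcritLine (r ν0 m : ℕ) (ν : Fin r → ℕ) (σ : ℕ → ℝ) (G2 : ℂ → ℂ) (c τ ξ η : ℝ) : ℂ :=
  (2 * Real.pi * Complex.I)⁻¹ *
    ∫ u in Set.Ioi (0 : ℝ), ∫ t : ℝ,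
      ((u : ℂ) / (-(c : ℂ) + Complex.I * t)) ^ ν0 *
        Complex.exp (-(τ : ℂ) * u - (u : ℂ) ^ 2 / 2 +
          (τ : ℂ) * (-(c : ℂ) + Complex.I * t) + (-(c : ℂ) + Complex.I * t) ^ 2 / 2) *
        ((u : ℂ) - (-(c : ℂ) + Complex.I * t))⁻¹ *
        (∏ j ∈ Finset.range m,
          ((u : ℂ) + (σ j : ℂ)) / ((-(c : ℂ) + Complex.I * t) + (σ j : ℂ))) *
        G1 r ν0 ν ((u * ξ : ℝ) : ℂ) * G2 ((-(c : ℂ) + Complex.I * t) * (η : ℂ)) * Complex.I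




/-- `Ψ(u;x)` in the case `r = 0`. -/
def Psi0 (ν0 : ℕ) (u x : ℝ) : ℝ :=
  Real.exp x * hyp0F1R ((ν0 : ℝ) + 1) (-(u * x)) / Real.Gamma ((ν0 : ℝ) + 1)

/-- `Φ(v;y)` in the case `r = 0`, complex `v`. -/
def Phi0 (ν0 : ℕ) (v : ℂ) (y : ℝ) : ℂ :=
  ((y ^ ν0 * Real.exp (-y) / Real.Gamma ((ν0 : ℝ) + 1) : ℝ) : ℂ) *
    hyp0F1 ((ν0 : ℝ) + 1) (-(v * (y : ℂ)))

/-- The kernel `K_N` in the case `r = 0`. -/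
def KN0 (ν0 N : ℕ) (a : Fin N → ℝ) (c : ℂ) (R : ℝ) (x y : ℝ) : ℂ :=
  ∫ u in Set.Ioi (0 : ℝ),
    (2 * Real.pi * Complex.I)⁻¹ *
      ∮ v in C(c, R),
        (u : ℂ) ^ ν0 * Complex.exp (-(u : ℂ) + v) * ((Psi0 ν0 u x : ℝ) : ℂ) *
          Phi0 ν0 v y * ((u : ℂ) - v)⁻¹ * ∏ l, ((u : ℂ) + (a l : ℂ)) / (v + (a l : ℂ))

/-- Laguerre polynomial `L_n^{ν}(x)`. -/
def laguerreL (n νp : ℕ) (x : ℝ) : ℝ :=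
  ∑ k ∈ Finset.range (n + 1),
    (-1 : ℝ) ^ k * (Nat.choose (n + νp) (n - k)) * x ^ k / Nat.factorial k

/-- The function `Ψ^{(μ)}(u;x)` of Section 4. -/
def PsiMu (r ν0 : ℕ) (μ ν : Fin r → ℕ) (u x : ℝ) : ℝ :=
  (1 / Real.Gamma ((ν0 : ℝ) + 1)) *
    ∑' k : ℕ, x ^ k / Nat.factorial k * hyp1F1T k ((ν0 : ℝ) + 1) u *
      ∏ l, Real.Gamma ((μ l : ℝ) + 1 + k) / Real.Gamma ((ν l : ℝ) + 1 + k)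

/-- The open unit cube in `ℝ^r`. -/
def unitCube (r : ℕ) : Set (Fin r → ℝ) := {t | ∀ i, 0 < t i ∧ t i < 1}

/-- The function `Φ^{(μ)}(v;y)` of Section 4, complex `v`. -/
def PhiMu (r ν0 : ℕ) (μ ν : Fin r → ℕ) (v : ℂ) (y : ℝ) : ℂ :=
  ((1 / (Real.Gamma ((ν0 : ℝ) + 1) * ∏ l, Real.Gamma ((μ l : ℝ) - (ν l : ℝ))) : ℝ) : ℂ) *
    ∫ t in unitCube r,
      (((∏ l, (t l) ^ ((ν l : ℝ) - 1) * (1 - t l) ^ ((μ l : ℝ) - (ν l : ℝ) - 1)) *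
          (y / ∏ l, t l) ^ ν0 * Real.exp (-(y / ∏ l, t l)) : ℝ) : ℂ) *
        hyp0F1 ((ν0 : ℝ) + 1) (-(v * ((y / ∏ l, t l : ℝ) : ℂ)))

/-- The function `Φ^{(μ)}(v;y)` of Section 4, real `v`. -/
def PhiMuR (r ν0 : ℕ) (μ ν : Fin r → ℕ) (v y : ℝ) : ℝ :=
  (1 / (Real.Gamma ((ν0 : ℝ) + 1) * ∏ l, Real.Gamma ((μ l : ℝ) - (ν l : ℝ)))) *
    ∫ t in unitCube r,
      ((∏ l, (t l) ^ ((ν l : ℝ) - 1) * (1 - t l) ^ ((μ l : ℝ) - (ν l : ℝ) - 1)) *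
          (y / ∏ l, t l) ^ ν0 * Real.exp (-(y / ∏ l, t l))) *
        hyp0F1R ((ν0 : ℝ) + 1) (-(v * (y / ∏ l, t l)))

/-- The kernel `K_N` for the truncated-unitary product of Section 4. -/
def KNmu (r ν0 N : ℕ) (μ ν : Fin r → ℕ) (a : Fin N → ℝ) (c : ℂ) (R : ℝ) (x y : ℝ) : ℂ :=
  ∫ u in Set.Ioi (0 : ℝ),
    (2 * Real.pi * Complex.I)⁻¹ *
      ∮ v in C(c, R),
        (u : ℂ) ^ ν0 * Complex.exp (-(u : ℂ) + v) * ((PsiMu r ν0 μ ν u x : ℝ) : ℂ) *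
          PhiMu r ν0 μ ν v y * ((u : ℂ) - v)⁻¹ * ∏ l, ((u : ℂ) + (a l : ℂ)) / (v + (a l : ℂ))

/-- Mixed domain `(0,1)^q × (0,∞)^{r-q}`. -/
def mixedSet (r q : ℕ) : Set (Fin r → ℝ) := {t | ∀ l, 0 < t l ∧ ((l : ℕ) < q → t l < 1)}

/-- The Meijer G-function `G^{1,q}_{q,r+2}(-μ₁,…,-μ_q; 0,-ν₀,…,-ν_r | z)`, real form. -/
def G1qR (r ν0 q : ℕ) (μ ν : Fin r → ℕ) (z : ℝ) : ℝ :=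
  ∑' k : ℕ, (-z) ^ k *
    (∏ l ∈ Finset.univ.filter fun l : Fin r => (l : ℕ) < q, Real.Gamma ((μ l : ℝ) + 1 + k)) /
    (Nat.factorial k * Real.Gamma ((ν0 : ℝ) + 1 + k) *
      ∏ l, Real.Gamma ((ν l : ℝ) + 1 + k))

/-- The Meijer G-function `G^{1,q}_{q,r+2}(-μ₁,…,-μ_q; 0,-ν₀,…,-ν_r | z)`, complex form. -/
def G1q (r ν0 q : ℕ) (μ ν : Fin r → ℕ) (z : ℂ) : ℂ :=
  ∑' k : ℕ, (-z) ^ k *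
    ((∏ l ∈ Finset.univ.filter fun l : Fin r => (l : ℕ) < q,
      Real.Gamma ((μ l : ℝ) + 1 + k) : ℝ) : ℂ) /
    ((Nat.factorial k : ℂ) * (Real.Gamma ((ν0 : ℝ) + 1 + k) : ℂ) *
      ∏ l, (Real.Gamma ((ν l : ℝ) + 1 + k) : ℂ))

/-- The Meijer G-function `G^{r+1,0}_{q,r+2}(μ₁,…,μ_q; ν₀,…,ν_r,0 | z)` for `z > 0`. -/
def G2qR (r ν0 q : ℕ) (μ ν : Fin r → ℕ) (z : ℝ) : ℝ :=
  ∫ t in mixedSet r q,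
    (∏ l : Fin r, if l.val < q then
        (t l) ^ ((ν l : ℝ) - 1) * (1 - t l) ^ ((μ l : ℝ) - (ν l : ℝ) - 1) /
          Real.Gamma ((μ l : ℝ) - (ν l : ℝ))
      else (t l) ^ ((ν l : ℝ) - 1) * Real.exp (-t l)) *
      g0R ν0 (z / ∏ l, t l)

/-!
For real `a_j` the function `Φ(-a_j; ·)` is a Mellin convolution of Gamma densities with the weight
`s ^ ν₀ e^{-s} ₀F₁(ν₀+1; a_j s) / Γ(ν₀+1)`. Its `i`-th moment is therefore the Gamma factor
`∏ Γ(ν_l+i+1)` times the `i`-th moment of that weight, and integrating the latter termwise gives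
`e^{a_j} p_i(a_j)` for a monic polynomial `p_i` of degree `i`, a Laguerre polynomial.

Row operations turn `∏ (z - x_l)⁻¹` times the Vandermonde determinant into a determinant in
which the functions `1, x, …, x^{N-1}` are replaced by `(z - x)⁻¹, 1, …, x^{N-2}`. By Andréief's
identity the average is then a quotient of two determinants, whose rows are moments of the `ξ_j`
except for one row of Stieltjes transforms. As monic polynomials may be replaced by powers, the
denominator is essentially the Vandermonde determinant of the `a_j`, the minors of the special row
are Vandermonde determinants of `N - 1` of them, and each quotient of the two contributes
`∏_{l ≠ j} (a_l - a_j)⁻¹`.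
-/

section Determinants

open Polynomial Matrix

lemma prod_univ_erase_eq_prod_succAbove {M : Type*} [CommMonoid M] {n : ℕ}
    (f : Fin (n + 1) → M) (j : Fin (n + 1)) :
    ∏ l ∈ Finset.univ.erase j, f l = ∏ l, f (j.succAbove l) := by
  rw [← Finset.sdiff_singleton_eq_erase, ← Finset.compl_eq_univ_sdiff, ← Fin.image_succAbove_univ,
    Finset.prod_image Fin.succAbove_right_injective.injOn]

lemma det_vandermonde_eq_mul_det_vandermonde_succAbove {R : Type*} [CommRing R] {n : ℕ}
    (a : Fin (n + 1) → R) (j : Fin (n + 1)) :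
    (vandermonde a).det = (-1) ^ (j : ℕ) * (∏ l, (a (j.succAbove l) - a j)) *
      (vandermonde (a ∘ j.succAbove)).det := by
  have moveRow : (vandermonde (a ∘ j.cycleRange.symm)).det = (-1) ^ (j : ℕ) *
      (vandermonde a).det := by
    change ((vandermonde a).submatrix j.cycleRange.symm id).det = _
    simp [det_permute, Fin.sign_cycleRange]
  have factorRow : (vandermonde (a ∘ j.cycleRange.symm)).det =
      (∏ l, (a (j.succAbove l) - a j)) * (vandermonde (a ∘ j.succAbove)).det := by
    simp only [det_vandermonde, Fin.prod_univ_succ, Fin.prod_Ioi_zero, Fin.prod_Ioi_succ,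
      Function.comp_apply, Fin.cycleRange_symm_zero, Fin.cycleRange_symm_succ]
  rw [mul_assoc, ← factorRow, moveRow, ← mul_assoc, ← mul_pow]
  simp

lemma det_eval_monic_eq_det_vandermonde {R : Type*} [CommRing R] {n : ℕ} {p : Fin n → R[X]}
    (hp : ∀ i, IsMonicOfDegree (p i) i) (a : Fin n → R) :
    (of fun i j => (p i).eval (a j)).det = (vandermonde a).det := by
  rw [det_eval_matrixOfPolynomials_eq_det_vandermonde a p (fun i => (hp i).natDegree_eq)
    fun i => (hp i).monic, ← det_transpose]
  rfl

/-- Up to the sign `(-1) ^ n`, the sum is the top coefficient of the Lagrange interpolant of `h`. -/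
lemma det_vecCons_eval_monic {K : Type*} [Field K] {n : ℕ} {p : Fin n → K[X]}
    (hp : ∀ i, IsMonicOfDegree (p i) i) {a : Fin (n + 1) → K}
    (ha : Function.Injective a) (h : Fin (n + 1) → K) :
    (of (vecCons h fun i j => (p i).eval (a j))).det =
      (vandermonde a).det * ∑ j, h j * ∏ l ∈ Finset.univ.erase j, (a l - a j)⁻¹ := by
  rw [det_succ_row_zero, Finset.mul_sum]
  refine Finset.sum_congr rfl fun j _ => ?_
  have minor : ((of (vecCons h fun i j => (p i).eval (a j))).submatrix Fin.succ j.succAbove).det =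
      (vandermonde (a ∘ j.succAbove)).det :=
    det_eval_monic_eq_det_vandermonde hp (a ∘ j.succAbove)
  have nodes : ∏ l, (a (j.succAbove l) - a j) ≠ 0 :=
    Finset.prod_ne_zero_iff.2 fun l _ => sub_ne_zero.2 (ha.ne (Fin.succAbove_ne j l))
  rw [minor, det_vandermonde_eq_mul_det_vandermonde_succAbove a j,
    prod_univ_erase_eq_prod_succAbove, Finset.prod_inv_distrib, of_apply, cons_val_zero]
  field_simp

lemma det_mul_row_mul_column {R ι : Type*} [CommRing R] [Fintype ι] [DecidableEq ι]
    (c b : ι → R) (A : Matrix ι ι R) :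
    (of fun i j => c i * (b j * A i j)).det = (∏ i, c i) * (∏ j, b j) * A.det := by
  rw [mul_assoc, ← det_mul_row, ← det_mul_column]
  rfl

lemma det_mul_eval_monic {R : Type*} [CommRing R] {n : ℕ} {p : Fin n → R[X]}
    (hp : ∀ i, IsMonicOfDegree (p i) i) (c b a : Fin n → R) :
    (of fun i j => c i * (b j * (p i).eval (a j))).det =
      (∏ i, c i) * (∏ j, b j) * (vandermonde a).det := by
  rw [← det_eval_monic_eq_det_vandermonde hp, ← det_mul_row_mul_column]
  rfl

lemma det_vecCons_mul_eval_monic {K : Type*} [Field K] {n : ℕ} {p : Fin n → K[X]}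
    (hp : ∀ i, IsMonicOfDegree (p i) i) (c : Fin n → K)
    {b a : Fin (n + 1) → K} (hb : ∀ j, b j ≠ 0) (ha : Function.Injective a)
    (h : Fin (n + 1) → K) :
    (of (vecCons h fun i j => c i * (b j * (p i).eval (a j)))).det =
      (∏ i, c i) * (∏ j, b j) * ((vandermonde a).det *
        ∑ j, h j * ((b j)⁻¹ * ∏ l ∈ Finset.univ.erase j, (a l - a j)⁻¹)) := by
  have rescale : of (vecCons h fun i j => c i * (b j * (p i).eval (a j))) =
      of fun i j => (vecCons 1 c : Fin (n + 1) → K) i *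
        (b j * of (vecCons (fun j => h j * (b j)⁻¹) fun i j => (p i).eval (a j)) i j) := by
    ext i j
    refine Fin.cases ?_ (fun i => ?_) i
    · simp [mul_left_comm (b j), hb j]
    · simp
  rw [rescale, det_mul_row_mul_column, det_vecCons_eval_monic hp ha]
  simp [Fin.prod_univ_succ (n := n) (vecCons 1 c), mul_assoc]

lemma det_vecCons_div_det_mul_eval_monic {K : Type*} [Field K] {n : ℕ} {p : ℕ → K[X]}
    (hp : ∀ i, IsMonicOfDegree (p i) i) {c : ℕ → K} (hc : ∀ i, c i ≠ 0)
    {b a : Fin (n + 1) → K} (hb : ∀ j, b j ≠ 0) (ha : Function.Injective a)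
    (h : Fin (n + 1) → K) :
    (of (vecCons h fun (i : Fin n) j => c i * (b j * (p i).eval (a j)))).det /
        (of fun i j : Fin (n + 1) => c i * (b j * (p i).eval (a j))).det =
      (c n)⁻¹ * ∑ j, h j * ((b j)⁻¹ * ∏ l ∈ Finset.univ.erase j, (a l - a j)⁻¹) := by
  rw [det_vecCons_mul_eval_monic (fun i => hp i) (fun i => c i) hb ha,
    det_mul_eval_monic (fun i => hp i) (fun i => c i) b a,
    Fin.prod_univ_castSucc (fun i : Fin (n + 1) => c i)]
  have hV : (vandermonde a).det ≠ 0 := det_vandermonde_ne_zero_iff.2 ha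
  have hb' : ∏ j, b j ≠ 0 := Finset.prod_ne_zero_iff.2 fun j _ => hb j
  have hc' : ∏ i : Fin n, c i ≠ 0 := Finset.prod_ne_zero_iff.2 fun i _ => hc i
  have := hc n
  simp only [Fin.val_castSucc, Fin.val_last]
  field_simp

lemma prod_inv_sub_mul_det_pow {K : Type*} [Field K] {n : ℕ} {z : K} {x : Fin (n + 1) → K}
    (hx : ∀ j, z ≠ x j) :
    (∏ j, (z - x j)⁻¹) * (of fun i j : Fin (n + 1) => x j ^ (i : ℕ)).det =
      (-1) ^ n * (of (vecCons (fun j => (z - x j)⁻¹) fun (i : Fin n) j => x j ^ (i : ℕ))).det := by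
  have rowReduce : (of fun i j : Fin (n + 1) => (z - x j)⁻¹ * x j ^ (i : ℕ)).det =
      (of (vecCons (fun j => (z - x j)⁻¹) fun (i : Fin n) j => -x j ^ (i : ℕ))).det := by
    refine det_eq_of_forall_row_eq_smul_add_pred (fun _ => z) (fun j => by simp) fun i j => ?_
    have := sub_ne_zero.2 (hx j)
    simp only [of_apply, cons_val_succ, Fin.val_succ, Fin.val_castSucc]
    field_simp
    ring
  have signs : of (vecCons (fun j => (z - x j)⁻¹) fun (i : Fin n) j => -x j ^ (i : ℕ)) =
      of fun i j => (vecCons 1 fun _ => -1 : Fin (n + 1) → K) i *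
        of (vecCons (fun j => (z - x j)⁻¹) fun (i : Fin n) j => x j ^ (i : ℕ)) i j := by
    ext i j
    refine Fin.cases ?_ (fun i => ?_) i <;> simp
  rw [← det_mul_row]
  simp only [of_apply]
  rw [rowReduce, signs, det_mul_column, Fin.prod_univ_succ]
  simp

end Determinants

section PolynomialEnsembles

open Matrix

variable {𝕜 E : Type*} [RCLike 𝕜] [MeasurableSpace E] {μ : Measure E} [SigmaFinite μ]

section Andreief

variable {ι : Type*} [Fintype ι] {f ξ : ι → E → 𝕜}

lemma integrable_prod_perm_mul (h : ∀ i j, Integrable (fun x => f i x * ξ j x) μ)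
    (σ τ : ι → ι) :
    Integrable (fun x : ι → E => ∏ j, f (σ j) (x j) * ξ (τ j) (x j)) (Measure.pi fun _ => μ) :=
  Integrable.fintype_prod (f := fun j x => f (σ j) x * ξ (τ j) x) fun _ => h _ _

variable [DecidableEq ι]

lemma det_mul_det_eq_sum_perm_sum_perm {R : Type*} [CommRing R] (A B : Matrix ι ι R) :
    A.det * B.det = ∑ τ : Equiv.Perm ι, ∑ σ : Equiv.Perm ι,
      ((Equiv.Perm.sign τ : ℤ) : R) * ((Equiv.Perm.sign σ : ℤ) : R) *
        ∏ j, A (σ j) j * B (τ j) j := by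
  rw [det_apply', det_apply', Finset.sum_mul_sum, Finset.sum_comm]
  refine Finset.sum_congr rfl fun τ _ => Finset.sum_congr rfl fun σ _ => ?_
  rw [Finset.prod_mul_distrib]
  ring

lemma sum_perm_sign_mul_sign_mul_prod {R : Type*} [CommRing R] (A : Matrix ι ι R)
    (τ : Equiv.Perm ι) :
    ∑ σ : Equiv.Perm ι, ((Equiv.Perm.sign τ : ℤ) : R) * ((Equiv.Perm.sign σ : ℤ) : R) *
      ∏ j, A (σ j) (τ j) = A.det := by
  have sign_sq : ((Equiv.Perm.sign τ : ℤ) : R) * ((Equiv.Perm.sign τ : ℤ) : R) = 1 := by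
    rw [← Int.cast_mul, ← Units.val_mul, Int.units_mul_self, Units.val_one, Int.cast_one]
  simp_rw [mul_assoc, ← Finset.mul_sum]
  rw [← one_mul A.det, ← sign_sq, mul_assoc, ← det_permute', det_apply']
  rfl

/-- Andréief's identity. -/
theorem integral_det_mul_det (h : ∀ i j, Integrable (fun x => f i x * ξ j x) μ) :
    ∫ x : ι → E, (of fun i j => f i (x j)).det * (of fun i j => ξ i (x j)).det
        ∂Measure.pi (fun _ => μ) =
      (Fintype.card ι).factorial * (of fun i j => ∫ x, f i x * ξ j x ∂μ).det := by
  have hterm (τ σ : Equiv.Perm ι) := (integrable_prod_perm_mul h σ τ).const_mul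
    (((Equiv.Perm.sign τ : ℤ) : 𝕜) * ((Equiv.Perm.sign σ : ℤ) : 𝕜))
  simp_rw [det_mul_det_eq_sum_perm_sum_perm, of_apply]
  rw [integral_finsetSum _ fun τ _ => integrable_finsetSum _ fun σ _ => hterm τ σ]
  have hperm (τ : Equiv.Perm ι) := calc
    ∫ x : ι → E, ∑ σ : Equiv.Perm ι, ((Equiv.Perm.sign τ : ℤ) : 𝕜) *
        ((Equiv.Perm.sign σ : ℤ) : 𝕜) * ∏ j, f (σ j) (x j) * ξ (τ j) (x j) ∂Measure.pi (fun _ => μ)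
      = ∑ σ : Equiv.Perm ι, ((Equiv.Perm.sign τ : ℤ) : 𝕜) * ((Equiv.Perm.sign σ : ℤ) : 𝕜) *
          ∏ j, ∫ x, f (σ j) x * ξ (τ j) x ∂μ := by
        rw [integral_finsetSum _ fun σ _ => hterm τ σ]
        refine Finset.sum_congr rfl fun σ _ => ?_
        rw [integral_const_mul, integral_fintype_prod_eq_prod fun j x => f (σ j) x * ξ (τ j) x]
    _ = (of fun i j => ∫ x, f i x * ξ j x ∂μ).det :=
        sum_perm_sign_mul_sign_mul_prod (of fun i j => ∫ x, f i x * ξ j x ∂μ) τ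
  simp_rw [hperm]
  rw [Finset.sum_const, Finset.card_univ, Fintype.card_perm, nsmul_eq_mul]

end Andreief

theorem integral_prod_inv_sub_mul_det_pow_mul_det {n : ℕ} {z : 𝕜} {φ : E → 𝕜}
    {ξ : Fin (n + 1) → E → 𝕜} (hz : ∀ᵐ x ∂μ, z ≠ φ x)
    (hres : ∀ j, Integrable (fun x => (z - φ x)⁻¹ * ξ j x) μ)
    (hmom : ∀ (i : Fin n) j, Integrable (fun x => φ x ^ (i : ℕ) * ξ j x) μ) :
    ∫ x : Fin (n + 1) → E, (∏ l, (z - φ (x l))⁻¹) *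
        ((of fun i j : Fin (n + 1) => φ (x j) ^ (i : ℕ)).det * (of fun i j => ξ i (x j)).det)
        ∂Measure.pi (fun _ => μ) =
      (-1) ^ n * ((n + 1).factorial * (of (vecCons (fun j => ∫ x, (z - φ x)⁻¹ * ξ j x ∂μ)
        fun (i : Fin n) j => ∫ x, φ x ^ (i : ℕ) * ξ j x ∂μ)).det) := by
  set f : Fin (n + 1) → E → 𝕜 := vecCons (fun x => (z - φ x)⁻¹) fun i x => φ x ^ (i : ℕ)
  have hf (i j) : Integrable (fun x => f i x * ξ j x) μ :=
    Fin.cases (hres j) (fun i => hmom i j) i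
  have hpoint (x : Fin (n + 1) → E) (hx : ∀ l, z ≠ φ (x l)) :
      (∏ l, (z - φ (x l))⁻¹) * ((of fun i j : Fin (n + 1) => φ (x j) ^ (i : ℕ)).det *
          (of fun i j => ξ i (x j)).det) =
        (-1) ^ n * ((of fun i j => f i (x j)).det * (of fun i j => ξ i (x j)).det) := by
    rw [← mul_assoc, prod_inv_sub_mul_det_pow hx, mul_assoc]
    congr 4
    ext i j
    exact Fin.cases rfl (fun _ => rfl) i
  have hz' : ∀ᵐ x ∂Measure.pi fun _ : Fin (n + 1) => μ, ∀ l, z ≠ φ (x l) :=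
    ae_all_iff.2 fun l => (Measure.quasiMeasurePreserving_eval (fun _ => μ) l).ae hz
  rw [integral_congr_ae (hz'.mono hpoint), integral_const_mul, integral_det_mul_det hf,
    Fintype.card_fin]
  congr 4
  ext i j
  exact Fin.cases rfl (fun _ => rfl) i

end PolynomialEnsembles

section Laguerre

open Polynomial

lemma hasSum_pow_div_factorial_mul_choose (a : ℝ) (j : ℕ) :
    HasSum (fun k : ℕ => a ^ k / k.factorial * k.choose j) (a ^ j / j.factorial * Real.exp a) := by
  have tail (k : ℕ) : a ^ (k + j) / (k + j).factorial * (k + j).choose j =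
      a ^ j / j.factorial * (a ^ k / k.factorial) := by
    have hchoose : ((k + j).choose j : ℝ) * k.factorial * j.factorial = (k + j).factorial := by
      exact_mod_cast Nat.add_choose_mul_factorial_mul_factorial k j
    rw [← hchoose, pow_add]
    have : ((k + j).choose j : ℝ) ≠ 0 := by
      exact_mod_cast (Nat.choose_pos (Nat.le_add_left j k)).ne'
    field_simp
  have head : ∑ k ∈ Finset.range j, a ^ k / k.factorial * (k.choose j : ℝ) = 0 :=
    Finset.sum_eq_zero fun k hk => by
      rw [Nat.choose_eq_zero_of_lt (Finset.mem_range.1 hk), Nat.cast_zero, mul_zero]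
  rw [← hasSum_nat_add_iff' j, head, sub_zero]
  simp_rw [tail, Real.exp_eq_exp_ℝ]
  exact (NormedSpace.expSeries_div_hasSum_exp a).mul_left _

/-- The monic Laguerre polynomial `i! L_i^{(ν₀)}(-X)`, written without alternating signs. -/
def monicLaguerre (ν0 i : ℕ) : ℝ[X] :=
  ∑ j ∈ Finset.range (i + 1), C (i.factorial * (i + ν0).choose (i - j) / j.factorial : ℝ) * X ^ j

lemma isMonicOfDegree_monicLaguerre (ν0 i : ℕ) : IsMonicOfDegree (monicLaguerre ν0 i) i := by
  refine (isMonicOfDegree_iff _ _).2 ⟨natDegree_sum_le_of_forall_le _ _ fun j hj => ?_, ?_⟩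
  · exact (natDegree_C_mul_X_pow_le _ _).trans (Nat.lt_succ_iff.1 (Finset.mem_range.1 hj))
  · simp [monicLaguerre, coeff_C_mul, coeff_X_pow, i.factorial_ne_zero]

lemma factorial_div_factorial_eq_sum_choose (i n k : ℕ) :
    ((i + n + k).factorial / (n + k).factorial : ℝ) =
      ∑ j ∈ Finset.range (i + 1), (i.factorial * (i + n).choose (i - j) * k.choose j : ℝ) := by
  have hchoose : ((i + n + k).factorial / (n + k).factorial : ℝ) =
      i.factorial * (i + n + k).choose i := by
    rw [Nat.cast_choose ℝ (by omega : i ≤ i + n + k), (by omega : i + n + k - i = n + k)]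
    field_simp
  rw [hchoose, Nat.add_choose_eq, ← Finset.Nat.sum_antidiagonal_swap,
    Finset.Nat.sum_antidiagonal_eq_sum_range_succ_mk]
  push_cast
  simp_rw [Finset.mul_sum, Prod.swap, mul_assoc]

lemma hasSum_monicLaguerre (ν0 i : ℕ) (a : ℝ) :
    HasSum (fun k : ℕ => a ^ k / k.factorial * ((i + ν0 + k).factorial / (ν0 + k).factorial))
      (Real.exp a * (monicLaguerre ν0 i).eval a) := by
  have h := hasSum_sum (s := Finset.range (i + 1)) fun j _ =>
    (hasSum_pow_div_factorial_mul_choose a j).mul_left (i.factorial * (i + ν0).choose (i - j) : ℝ)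
  have hval : ∑ j ∈ Finset.range (i + 1), (i.factorial * (i + ν0).choose (i - j) : ℝ) *
      (a ^ j / j.factorial * Real.exp a) = Real.exp a * (monicLaguerre ν0 i).eval a := by
    rw [monicLaguerre, eval_finsetSum, Finset.mul_sum]
    refine Finset.sum_congr rfl fun j _ => ?_
    rw [eval_C_mul, eval_X_pow]
    ring
  rw [← hval]
  refine h.congr_fun fun k => ?_
  rw [factorial_div_factorial_eq_sum_choose, Finset.mul_sum]
  exact Finset.sum_congr rfl fun j _ => by ring

end Laguerre

lemma integrable_of_hasSum_of_summable_integral_norm {α ι E : Type*} [MeasurableSpace α]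
    {μ : Measure α} [Countable ι] [NormedAddCommGroup E] {F : ι → α → E} {f : α → E}
    (hF : ∀ i, Integrable (F i) μ) (hsum : Summable fun i => ∫ x, ‖F i x‖ ∂μ)
    (hf : ∀ᵐ x ∂μ, HasSum (fun i => F i x) (f x)) : Integrable f μ := by
  have hmeas : AEStronglyMeasurable f μ :=
    aestronglyMeasurable_of_tendsto_ae atTop
      (fun s => (integrable_finsetSum s fun i _ => hF i).aestronglyMeasurable) hf
  refine ⟨hmeas, ?_⟩
  calc ∫⁻ x, ‖f x‖ₑ ∂μ
    _ ≤ ∫⁻ x, ∑' i, ‖F i x‖ₑ ∂μ := lintegral_mono_ae <| hf.mono fun x hx => by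
        rw [← hx.tsum_eq]
        exact enorm_tsum_le_tsum_enorm
    _ = ∑' i, ENNReal.ofReal (∫ x, ‖F i x‖ ∂μ) := by
        rw [lintegral_tsum fun i => (hF i).aestronglyMeasurable.enorm]
        exact tsum_congr fun i => (ofReal_integral_norm_eq_lintegral_enorm (hF i)).symm
    _ < ⊤ := hsum.tsum_ofReal_lt_top

section BesselWeight

lemma summable_hyp0F1R (b z : ℝ) :
    Summable fun k : ℕ => Real.Gamma b * z ^ k / (k.factorial * Real.Gamma (b + k)) := by
  refine summable_of_ratio_norm_eventually_le (r := 1 / 2) (by norm_num) ?_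
  have hb : ∀ᶠ k : ℕ in atTop, 1 - b ≤ k := tendsto_natCast_atTop_atTop.eventually_ge_atTop _
  have hz : ∀ᶠ k : ℕ in atTop, 2 * |z| ≤ k := tendsto_natCast_atTop_atTop.eventually_ge_atTop _
  filter_upwards [hb, hz] with k hbk hzk
  have hpos : 1 ≤ b + k := by linarith
  have ratio : Real.Gamma b * z ^ (k + 1) /
      ((k + 1).factorial * Real.Gamma (b + (k + 1 : ℕ))) =
        z / ((k + 1) * (b + k)) * (Real.Gamma b * z ^ k / (k.factorial * Real.Gamma (b + k))) := by
    rw [Nat.cast_succ, ← add_assoc, Real.Gamma_add_one (by positivity), Nat.factorial_succ]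
    push_cast
    field_simp
    ring
  rw [ratio, norm_mul]
  gcongr
  rw [norm_div, Real.norm_eq_abs, Real.norm_of_nonneg (by positivity), div_le_iff₀ (by positivity)]
  nlinarith

lemma measurable_hyp0F1R (b : ℝ) : Measurable (hyp0F1R b) :=
  measurable_of_tendsto_metrizable (f := fun n z => ∑ k ∈ Finset.range n,
      Real.Gamma b * z ^ k / (k.factorial * Real.Gamma (b + k))) (fun n => by fun_prop) <|
    tendsto_pi_nhds.2 fun z => (summable_hyp0F1R b z).hasSum.tendsto_sum_nat

/-- The weight `Φ(-a; s)` in the case `r = 0` of a single Ginibre matrix plus a source. -/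
def besselWeight (ν0 : ℕ) (a s : ℝ) : ℝ :=
  s ^ ν0 * Real.exp (-s) * hyp0F1R (ν0 + 1) (a * s) / Real.Gamma (ν0 + 1)

lemma measurable_besselWeight (ν0 : ℕ) (a : ℝ) : Measurable (besselWeight ν0 a) := by
  have := (measurable_hyp0F1R (ν0 + 1)).comp (measurable_const_mul a)
  unfold besselWeight
  fun_prop

lemma hasSum_besselWeight (ν0 : ℕ) (a s : ℝ) :
    HasSum (fun k : ℕ => a ^ k / k.factorial / (ν0 + k).factorial * (s ^ (ν0 + k) * Real.exp (-s)))
      (besselWeight ν0 a s) := by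
  have h := ((summable_hyp0F1R (ν0 + 1) (a * s)).hasSum.mul_left (s ^ ν0 * Real.exp (-s))).div_const
    (Real.Gamma (ν0 + 1))
  refine h.congr_fun fun k => ?_
  have hΓ : Real.Gamma (ν0 + 1 + k) = (ν0 + k).factorial := by
    rw [← Real.Gamma_nat_eq_factorial, Nat.cast_add, add_right_comm]
  have := (Real.Gamma_pos_of_pos (by positivity : (0 : ℝ) < ν0 + 1)).ne'
  rw [hΓ, mul_pow, pow_add]
  field_simp

lemma integrableOn_pow_mul_exp_neg (m : ℕ) :
    IntegrableOn (fun s : ℝ => s ^ m * Real.exp (-s)) (Set.Ioi 0) := by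
  simpa [mul_comm] using Real.GammaIntegral_convergent (s := m + 1) (by positivity)

lemma integral_pow_mul_exp_neg (m : ℕ) :
    ∫ s in Set.Ioi (0 : ℝ), s ^ m * Real.exp (-s) = m.factorial := by
  rw [← Real.Gamma_nat_eq_factorial, Real.Gamma_eq_integral (by positivity)]
  simp [mul_comm]

lemma hasSum_pow_mul_besselWeight (ν0 i : ℕ) (a s : ℝ) :
    HasSum (fun k : ℕ => a ^ k / k.factorial / (ν0 + k).factorial *
      (s ^ (i + ν0 + k) * Real.exp (-s))) (s ^ i * besselWeight ν0 a s) := by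
  refine ((hasSum_besselWeight ν0 a s).mul_left (s ^ i)).congr_fun fun k => ?_
  rw [add_assoc, pow_add]
  ring

lemma summable_integral_norm_pow_mul_besselWeight (ν0 i : ℕ) (a : ℝ) :
    Summable fun k : ℕ => ∫ s in Set.Ioi (0 : ℝ),
      ‖a ^ k / k.factorial / (ν0 + k).factorial * (s ^ (i + ν0 + k) * Real.exp (-s))‖ := by
  refine (hasSum_monicLaguerre ν0 i |a|).summable.congr fun k => ?_
  have hnorm : Set.EqOn
      (fun s : ℝ => ‖a ^ k / k.factorial / (ν0 + k).factorial * (s ^ (i + ν0 + k) * Real.exp (-s))‖)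
      (fun s => |a| ^ k / k.factorial / (ν0 + k).factorial * (s ^ (i + ν0 + k) * Real.exp (-s)))
      (Set.Ioi 0) := fun s hs => by
    have : 0 ≤ s := (Set.mem_Ioi.1 hs).le
    simp [abs_of_nonneg this]
  rw [setIntegral_congr_fun measurableSet_Ioi hnorm, integral_const_mul, integral_pow_mul_exp_neg]
  ring

lemma integrableOn_pow_mul_besselWeight (ν0 i : ℕ) (a : ℝ) :
    IntegrableOn (fun s => s ^ i * besselWeight ν0 a s) (Set.Ioi 0) :=
  integrable_of_hasSum_of_summable_integral_norm
    (fun _ => (integrableOn_pow_mul_exp_neg _).const_mul _)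
    (summable_integral_norm_pow_mul_besselWeight ν0 i a)
    (ae_of_all _ (hasSum_pow_mul_besselWeight ν0 i a))

lemma integral_pow_mul_besselWeight (ν0 i : ℕ) (a : ℝ) :
    ∫ s in Set.Ioi (0 : ℝ), s ^ i * besselWeight ν0 a s =
      Real.exp a * (monicLaguerre ν0 i).eval a := by
  have h := hasSum_integral_of_summable_integral_norm
    (fun k => (integrableOn_pow_mul_exp_neg (i + ν0 + k)).const_mul
      (a ^ k / k.factorial / (ν0 + k).factorial))
    (summable_integral_norm_pow_mul_besselWeight ν0 i a)
  simp_rw [(hasSum_pow_mul_besselWeight ν0 i a _).tsum_eq, integral_const_mul,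
    integral_pow_mul_exp_neg] at h
  refine h.unique ((hasSum_monicLaguerre ν0 i a).congr_fun fun k => ?_)
  ring

end BesselWeight

section MellinConvolution

variable {φ : ℝ → ℝ} {i : ℕ}

lemma integrableOn_pow_mul_comp_div (hφ : IntegrableOn (fun s => s ^ i * φ s) (Set.Ioi 0)) {T : ℝ}
    (hT : 0 < T) : IntegrableOn (fun x => x ^ i * φ (x / T)) (Set.Ioi 0) := by
  have hscaled := (integrableOn_Ioi_comp_mul_right_iff (fun s => s ^ i * φ s) 0
    (inv_pos.2 hT)).2 (by rwa [zero_mul])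
  refine IntegrableOn.congr_fun (Integrable.const_mul hscaled (T ^ i)) (fun x _ => ?_)
    measurableSet_Ioi
  simp only [← div_eq_mul_inv, div_pow]
  field_simp

lemma integral_pow_mul_comp_div (φ : ℝ → ℝ) (i : ℕ) {T : ℝ} (hT : 0 < T) :
    ∫ x in Set.Ioi (0 : ℝ), x ^ i * φ (x / T) =
      T ^ (i + 1) * ∫ s in Set.Ioi (0 : ℝ), s ^ i * φ s := by
  have hscaled := integral_comp_mul_right_Ioi (fun s => s ^ i * φ s) 0 (inv_pos.2 hT)
  rw [zero_mul, inv_inv, smul_eq_mul] at hscaled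
  rw [pow_succ, mul_assoc, ← hscaled, ← integral_const_mul]
  refine integral_congr_ae (ae_of_all _ fun x => ?_)
  simp only [← div_eq_mul_inv, div_pow]
  field_simp

lemma integral_norm_pow_mul_comp_div (φ : ℝ → ℝ) (i : ℕ) {T : ℝ} (hT : 0 < T) :
    ∫ x in Set.Ioi (0 : ℝ), ‖x ^ i * φ (x / T)‖ =
      T ^ (i + 1) * ∫ s in Set.Ioi (0 : ℝ), s ^ i * ‖φ s‖ := by
  rw [← integral_pow_mul_comp_div (fun s => ‖φ s‖) i hT]
  refine setIntegral_congr_fun measurableSet_Ioi fun x hx => ?_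
  simp [abs_of_pos (Set.mem_Ioi.1 hx)]

variable {Ω : Type*} [MeasurableSpace Ω] {μ : Measure Ω} {w T : Ω → ℝ}

lemma integrable_prod_mul_pow_mul_comp_div [SFinite μ] (hw : AEStronglyMeasurable w μ)
    (hT : Measurable T) (hTpos : ∀ᵐ t ∂μ, 0 < T t)
    (hwT : Integrable (fun t => w t * T t ^ (i + 1)) μ) (hφm : Measurable φ)
    (hφ : IntegrableOn (fun s => s ^ i * φ s) (Set.Ioi 0)) :
    Integrable (fun p : ℝ × Ω => w p.2 * (p.1 ^ i * φ (p.1 / T p.2)))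
      ((volume.restrict (Set.Ioi 0)).prod μ) := by
  have hmeas : AEStronglyMeasurable (fun p : ℝ × Ω => w p.2 * (p.1 ^ i * φ (p.1 / T p.2)))
      ((volume.restrict (Set.Ioi 0)).prod μ) :=
    hw.comp_snd.mul (by fun_prop : Measurable fun p : ℝ × Ω =>
      p.1 ^ i * φ (p.1 / T p.2)).aestronglyMeasurable
  refine (integrable_prod_iff' hmeas).2 ⟨?_, ?_⟩
  · filter_upwards [hTpos] with t ht using (integrableOn_pow_mul_comp_div hφ ht).const_mul (w t)
  · refine (hwT.norm.mul_const (∫ s in Set.Ioi (0 : ℝ), s ^ i * ‖φ s‖)).congr ?_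
    filter_upwards [hTpos] with t ht
    simp_rw [norm_mul (w t), integral_const_mul, integral_norm_pow_mul_comp_div φ i ht, mul_assoc,
      norm_pow, Real.norm_of_nonneg ht.le]

lemma integrableOn_pow_mul_integral_mul_comp_div [SFinite μ] (hw : AEStronglyMeasurable w μ)
    (hT : Measurable T) (hTpos : ∀ᵐ t ∂μ, 0 < T t)
    (hwT : Integrable (fun t => w t * T t ^ (i + 1)) μ) (hφm : Measurable φ)
    (hφ : IntegrableOn (fun s => s ^ i * φ s) (Set.Ioi 0)) :
    IntegrableOn (fun x => x ^ i * ∫ t, w t * φ (x / T t) ∂μ) (Set.Ioi 0) := by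
  simp_rw [← integral_const_mul, mul_left_comm _ (w _)]
  exact (integrable_prod_mul_pow_mul_comp_div hw hT hTpos hwT hφm hφ).integral_prod_left

lemma integral_pow_mul_integral_mul_comp_div [SFinite μ] (hw : AEStronglyMeasurable w μ)
    (hT : Measurable T) (hTpos : ∀ᵐ t ∂μ, 0 < T t)
    (hwT : Integrable (fun t => w t * T t ^ (i + 1)) μ) (hφm : Measurable φ)
    (hφ : IntegrableOn (fun s => s ^ i * φ s) (Set.Ioi 0)) :
    ∫ x in Set.Ioi (0 : ℝ), x ^ i * ∫ t, w t * φ (x / T t) ∂μ =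
      (∫ t, w t * T t ^ (i + 1) ∂μ) * ∫ s in Set.Ioi (0 : ℝ), s ^ i * φ s := by
  rw [← integral_mul_const]
  simp_rw [← integral_const_mul (_ ^ i), mul_left_comm _ (w _)]
  rw [integral_integral_swap (integrable_prod_mul_pow_mul_comp_div hw hT hTpos hwT hφm hφ)]
  refine integral_congr_ae (hTpos.mono fun t ht => ?_)
  simp only [integral_const_mul, integral_pow_mul_comp_div φ i ht, mul_assoc]

end MellinConvolution

section GammaWeight

variable {ι : Type*} [Fintype ι]

/-- The unnormalized joint density at `t` of independent Gamma variables with shapes `s`. -/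
def gammaWeight (s t : ι → ℝ) : ℝ :=
  ∏ i, t i ^ (s i - 1) * Real.exp (-t i)

lemma measurable_gammaWeight (s : ι → ℝ) : Measurable (gammaWeight s) := by
  unfold gammaWeight
  fun_prop

lemma gammaWeight_mul_prod_pow (s : ι → ℝ) {t : ι → ℝ} (ht : ∀ i, 0 < t i) (n : ℕ) :
    gammaWeight s t * (∏ i, t i) ^ n = gammaWeight (fun i => s i + n) t := by
  rw [gammaWeight, gammaWeight, ← Finset.prod_pow, ← Finset.prod_mul_distrib]
  refine Finset.prod_congr rfl fun i _ => ?_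
  rw [mul_right_comm, ← Real.rpow_add_natCast (ht i).ne', sub_add_eq_add_sub]

lemma integrable_gammaWeight {s : ι → ℝ} (hs : ∀ i, 0 < s i) :
    Integrable (gammaWeight s) (Measure.pi fun _ => volume.restrict (Set.Ioi 0)) :=
  Integrable.fintype_prod (f := fun i t => t ^ (s i - 1) * Real.exp (-t)) fun i => by
    simpa only [mul_comm, IntegrableOn] using Real.GammaIntegral_convergent (hs i)

lemma integral_gammaWeight {s : ι → ℝ} (hs : ∀ i, 0 < s i) :
    ∫ t, gammaWeight s t ∂(Measure.pi fun _ => volume.restrict (Set.Ioi 0)) =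
      ∏ i, Real.Gamma (s i) := by
  unfold gammaWeight
  rw [integral_fintype_prod_eq_prod fun i t => t ^ (s i - 1) * Real.exp (-t)]
  exact Finset.prod_congr rfl fun i _ => by simp_rw [Real.Gamma_eq_integral (hs i), mul_comm]

end GammaWeight

section PhiMoments

lemma posOrth_eq_univ_pi (r : ℕ) : posOrth r = Set.univ.pi fun _ => Set.Ioi 0 := by
  ext
  simp [posOrth]

lemma measurableSet_posOrth (r : ℕ) : MeasurableSet (posOrth r) := by
  rw [posOrth_eq_univ_pi]
  exact MeasurableSet.univ_pi fun _ => measurableSet_Ioi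

lemma volume_restrict_posOrth (r : ℕ) :
    (volume : Measure (Fin r → ℝ)).restrict (posOrth r) =
      Measure.pi fun _ => volume.restrict (Set.Ioi 0) := by
  rw [posOrth_eq_univ_pi, volume_pi, Measure.restrict_pi_pi]

lemma PhiR_neg (r ν0 : ℕ) (ν : Fin r → ℕ) (a y : ℝ) :
    PhiR r ν0 ν (-a) y =
      ∫ t in posOrth r, gammaWeight (fun l => ν l) t * besselWeight ν0 a (y / ∏ l, t l) := by
  rw [PhiR, ← integral_const_mul]
  refine integral_congr_ae (ae_of_all _ fun t => ?_)
  simp only [gammaWeight, besselWeight, neg_mul, neg_neg]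
  ring

lemma gammaWeight_mul_prod_pow_ae_eq (r : ℕ) (s : Fin r → ℝ) (n : ℕ) :
    (fun t => gammaWeight s t * (∏ l, t l) ^ n) =ᵐ[volume.restrict (posOrth r)]
      gammaWeight fun l => s l + n := by
  filter_upwards [ae_restrict_mem (measurableSet_posOrth r)] with t ht
    using gammaWeight_mul_prod_pow s ht n

section Moments

variable (r ν0 : ℕ) (ν : Fin r → ℕ) (i : ℕ) (a : ℝ)

lemma ae_restrict_posOrth_prod_pos : ∀ᵐ t ∂volume.restrict (posOrth r), 0 < ∏ l, t l := by
  filter_upwards [ae_restrict_mem (measurableSet_posOrth r)] with t ht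
    using Finset.prod_pos fun l _ => ht l

lemma integrableOn_gammaWeight_mul_prod_pow_succ :
    IntegrableOn (fun t => gammaWeight (fun l => ν l) t * (∏ l, t l) ^ (i + 1)) (posOrth r) := by
  rw [IntegrableOn, integrable_congr (gammaWeight_mul_prod_pow_ae_eq r _ _),
    volume_restrict_posOrth]
  exact integrable_gammaWeight fun l => by positivity

lemma integral_gammaWeight_mul_prod_pow_succ :
    ∫ t in posOrth r, gammaWeight (fun l => ν l) t * (∏ l, t l) ^ (i + 1) =
      ∏ l, Real.Gamma (ν l + (i + 1 : ℕ)) := by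
  rw [integral_congr_ae (gammaWeight_mul_prod_pow_ae_eq r _ _), volume_restrict_posOrth]
  exact integral_gammaWeight fun l => by positivity

lemma integrableOn_pow_mul_PhiR_neg :
    IntegrableOn (fun x => x ^ i * PhiR r ν0 ν (-a) x) (Set.Ioi 0) := by
  simp_rw [PhiR_neg]
  exact integrableOn_pow_mul_integral_mul_comp_div
    (measurable_gammaWeight _).aestronglyMeasurable (by fun_prop)
    (ae_restrict_posOrth_prod_pos r) (integrableOn_gammaWeight_mul_prod_pow_succ r ν i)
    (measurable_besselWeight ν0 a) (integrableOn_pow_mul_besselWeight ν0 i a)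

lemma integral_pow_mul_PhiR_neg :
    ∫ x in Set.Ioi (0 : ℝ), x ^ i * PhiR r ν0 ν (-a) x =
      (∏ l, Real.Gamma (ν l + (i + 1 : ℕ))) * (Real.exp a * (monicLaguerre ν0 i).eval a) := by
  simp_rw [PhiR_neg]
  rw [integral_pow_mul_integral_mul_comp_div
    (measurable_gammaWeight _).aestronglyMeasurable (by fun_prop)
    (ae_restrict_posOrth_prod_pos r) (integrableOn_gammaWeight_mul_prod_pow_succ r ν i)
    (measurable_besselWeight ν0 a) (integrableOn_pow_mul_besselWeight ν0 i a),
    integral_gammaWeight_mul_prod_pow_succ, integral_pow_mul_besselWeight]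

end Moments

end PhiMoments

section StieltjesTransform

lemma exists_norm_inv_sub_ofReal_le {z : ℂ} (hz : -z ∈ Complex.slitPlane) :
    ∃ C, ∀ x : ℝ, 0 < x → ‖(z - x)⁻¹‖ ≤ C := by
  rcases hz with hre | him
  · refine ⟨((-z).re)⁻¹, fun x hx => ?_⟩
    rw [norm_inv]
    refine inv_anti₀ hre ((?_ : (-z).re ≤ |(z - x).re|).trans (Complex.abs_re_le_norm _))
    rw [Complex.sub_re, Complex.ofReal_re, abs_sub_comm, Complex.neg_re]
    exact (by linarith : -z.re ≤ x - z.re).trans (le_abs_self _)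
  · refine ⟨|(-z).im|⁻¹, fun x _ => ?_⟩
    rw [norm_inv]
    refine inv_anti₀ (abs_pos.2 him) ?_
    simpa using Complex.abs_im_le_norm (z - x)

lemma ne_ofReal_of_neg_mem_slitPlane {z : ℂ} (hz : -z ∈ Complex.slitPlane) {x : ℝ} (hx : 0 < x) :
    z ≠ x := by
  rintro rfl
  rw [← Complex.ofReal_neg, Complex.ofReal_mem_slitPlane] at hz
  linarith

lemma integrableOn_inv_sub_mul {z : ℂ} (hz : -z ∈ Complex.slitPlane) {ξ : ℝ → ℝ}
    (hξ : IntegrableOn ξ (Set.Ioi 0)) :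
    IntegrableOn (fun x : ℝ => (z - x)⁻¹ * (ξ x : ℂ)) (Set.Ioi 0) := by
  obtain ⟨C, hC⟩ := exists_norm_inv_sub_ofReal_le hz
  refine Integrable.bdd_mul (c := C) hξ.ofReal (by fun_prop) ?_
  filter_upwards [ae_restrict_mem measurableSet_Ioi] with x hx using hC x hx

lemma integral_inv_sub_mul_sum {ι : Type*} [Fintype ι] {z : ℂ} (hz : -z ∈ Complex.slitPlane)
    {ξ : ι → ℝ → ℝ} (hξ : ∀ j, IntegrableOn (ξ j) (Set.Ioi 0)) (k : ι → ℝ) :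
    ∫ t in Set.Ioi (0 : ℝ), (z - t)⁻¹ * ((∑ j, k j * ξ j t : ℝ) : ℂ) =
      ∑ j, (∫ t in Set.Ioi (0 : ℝ), (z - t)⁻¹ * (ξ j t : ℂ)) * k j := by
  simp_rw [← integral_mul_const]
  rw [← integral_finsetSum _ fun j _ => (integrableOn_inv_sub_mul hz (hξ j)).mul_const _]
  refine integral_congr_ae (ae_of_all _ fun t => ?_)
  simp only [Complex.ofReal_sum, Complex.ofReal_mul, Finset.mul_sum]
  exact Finset.sum_congr rfl fun j _ => by ring

open Matrix

lemma ofReal_det {ι : Type*} [Fintype ι] [DecidableEq ι] (f : ι → ι → ℝ) :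
    ((of f).det : ℂ) = (of fun i j => (f i j : ℂ)).det :=
  Complex.ofRealHom.map_det _

theorem integral_prod_inv_sub_mul_density {n : ℕ} {z : ℂ} (hz : -z ∈ Complex.slitPlane)
    {ξ : Fin (n + 1) → ℝ → ℝ}
    (hξ : ∀ i j : Fin (n + 1), IntegrableOn (fun x => x ^ (i : ℕ) * ξ j x) (Set.Ioi 0))
    (D : ℝ) :
    ∫ x in posOrth (n + 1), (∏ l, (z - x l)⁻¹) *
        ((1 / ((n + 1).factorial * D) * (of fun i j : Fin (n + 1) => x j ^ (i : ℕ)).det *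
          (of fun i j => ξ i (x j)).det : ℝ) : ℂ) =
      (-1) ^ n * ((of (vecCons (fun j => ∫ x in Set.Ioi (0 : ℝ), (z - x)⁻¹ * (ξ j x : ℂ))
        fun (i : Fin n) j =>
          ((∫ x in Set.Ioi (0 : ℝ), x ^ (i : ℕ) * ξ j x : ℝ) : ℂ))).det / D) := by
  have hne : ∀ᵐ x : ℝ ∂volume.restrict (Set.Ioi 0), z ≠ x := by
    filter_upwards [ae_restrict_mem measurableSet_Ioi] with x hx
      using ne_ofReal_of_neg_mem_slitPlane hz hx
  have hres (j) : Integrable (fun x : ℝ => (z - x)⁻¹ * (ξ j x : ℂ))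
      (volume.restrict (Set.Ioi (0 : ℝ))) :=
    integrableOn_inv_sub_mul hz (by simpa using hξ 0 j)
  have hmom (i : Fin n) (j) : Integrable (fun x : ℝ => (x : ℂ) ^ (i : ℕ) * (ξ j x : ℂ))
      (volume.restrict (Set.Ioi (0 : ℝ))) := by
    simpa using (hξ i.castSucc j).ofReal (𝕜 := ℂ)
  have ensemble := integral_prod_inv_sub_mul_det_pow_mul_det hne hres hmom
  have cast (x : Fin (n + 1) → ℝ) : (∏ l, (z - x l)⁻¹) *
      ((1 / ((n + 1).factorial * D) * (of fun i j : Fin (n + 1) => x j ^ (i : ℕ)).det *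
        (of fun i j => ξ i (x j)).det : ℝ) : ℂ) = ((n + 1).factorial * D : ℂ)⁻¹ *
      ((∏ l, (z - x l)⁻¹) * ((of fun i j : Fin (n + 1) => (x j : ℂ) ^ (i : ℕ)).det *
        (of fun i j => (ξ i (x j) : ℂ)).det)) := by
    simp only [Complex.ofReal_mul, ofReal_det, Complex.ofReal_pow]
    push_cast
    ring
  have moment (i : Fin n) (j) : ∫ x in Set.Ioi (0 : ℝ), (x : ℂ) ^ (i : ℕ) * (ξ j x : ℂ) =
      ((∫ x in Set.Ioi (0 : ℝ), x ^ (i : ℕ) * ξ j x : ℝ) : ℂ) := by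
    rw [← integral_complex_ofReal]
    push_cast
    rfl
  simp_rw [cast]
  rw [volume_restrict_posOrth, integral_const_mul, ensemble]
  simp_rw [moment]
  have : ((n + 1).factorial : ℂ) ≠ 0 := by exact_mod_cast (n + 1).factorial_ne_zero
  field_simp

end StieltjesTransform

section MomentDeterminants

open Polynomial Matrix

lemma isMonicOfDegree_map_monicLaguerre (ν0 i : ℕ) :
    IsMonicOfDegree ((monicLaguerre ν0 i).map Complex.ofRealHom) i :=
  ⟨by rw [(isMonicOfDegree_monicLaguerre ν0 i).monic.natDegree_map,
    (isMonicOfDegree_monicLaguerre ν0 i).natDegree_eq],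
    (isMonicOfDegree_monicLaguerre ν0 i).monic.map _⟩

lemma ofReal_integral_pow_mul_PhiR_neg (r ν0 : ℕ) (ν : Fin r → ℕ) (i : ℕ) (a : ℝ) :
    ((∫ x in Set.Ioi (0 : ℝ), x ^ i * PhiR r ν0 ν (-a) x : ℝ) : ℂ) =
      (∏ l, (Real.Gamma (ν l + (i + 1 : ℕ)) : ℂ)) *
        (Complex.exp a * ((monicLaguerre ν0 i).map Complex.ofRealHom).eval (a : ℂ)) := by
  rw [integral_pow_mul_PhiR_neg, ← Complex.ofRealHom_eq_coe a, eval_map_apply]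
  push_cast
  rfl

lemma det_vecCons_div_det_moments_PhiR {n : ℕ} (r ν0 : ℕ) (ν : Fin r → ℕ) {a : Fin (n + 1) → ℝ}
    (ha : Function.Injective a) (h : Fin (n + 1) → ℂ) :
    (of (vecCons h fun (i : Fin n) j =>
        ((∫ x in Set.Ioi (0 : ℝ), x ^ (i : ℕ) * PhiR r ν0 ν (-(a j)) x : ℝ) : ℂ))).det /
      ((of fun i j : Fin (n + 1) =>
        ∫ x in Set.Ioi (0 : ℝ), x ^ (i : ℕ) * PhiR r ν0 ν (-(a j)) x).det : ℂ) =
      (∏ l, (Real.Gamma (ν l + (n + 1 : ℕ)) : ℂ))⁻¹ *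
        ∑ j, h j * ((Real.exp (-(a j)) * ∏ l ∈ Finset.univ.erase j, (a l - a j)⁻¹ : ℝ) : ℂ) := by
  rw [ofReal_det]
  simp_rw [ofReal_integral_pow_mul_PhiR_neg]
  rw [det_vecCons_div_det_mul_eval_monic
    (p := fun i => (monicLaguerre ν0 i).map Complex.ofRealHom)
    (c := fun i => ∏ l, (Real.Gamma (ν l + (i + 1 : ℕ)) : ℂ)) (a := fun j => (a j : ℂ))
    (isMonicOfDegree_map_monicLaguerre ν0) (fun i => Finset.prod_ne_zero_iff.2 fun l _ => by
      exact_mod_cast (Real.Gamma_pos_of_pos (by positivity)).ne')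
    (fun j => Complex.exp_ne_zero _) (Complex.ofReal_injective.comp ha)]
  push_cast
  simp_rw [Complex.exp_neg]

end MomentDeterminants

theorem prop_2_6_ii_general (r ν0 N : ℕ) (hN : 0 < N) (ν : Fin r → ℕ) (a : Fin N → ℝ)
    (hdist : Function.Injective a)
    (g : Matrix (Fin N) (Fin N) ℝ)
    (hg : ∀ i j, g i j = ∫ x in Set.Ioi (0 : ℝ), x ^ (i : ℕ) * PhiR r ν0 ν (-(a j)) x)
    (P : (Fin N → ℝ) → ℝ)
    (hP : ∀ x, P x = (1 / ((Nat.factorial N : ℝ) * g.det)) *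
      (Matrix.of fun i j : Fin N => x j ^ (i : ℕ)).det *
      (Matrix.of fun i j : Fin N => PhiR r ν0 ν (-(a i)) (x j)).det)
    (z : ℂ) (hz : -z ∈ Complex.slitPlane) :
    ∫ x in {x : Fin N → ℝ | ∀ l, 0 < x l},
        (∏ l, (z - (x l : ℂ))⁻¹) * ((P x : ℝ) : ℂ) =
      ((-1 : ℂ) ^ (N - 1) / ∏ l, (Real.Gamma ((ν l : ℝ) + N) : ℂ)) *
        ∫ t in Set.Ioi (0 : ℝ), (z - (t : ℂ))⁻¹ *
          ((∑ j, Real.exp (-(a j)) * PhiR r ν0 ν (-(a j)) t *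
            ∏ l ∈ Finset.univ.erase j, (a l - a j)⁻¹ : ℝ) : ℂ) := by
  obtain ⟨n, rfl⟩ := Nat.exists_eq_add_one_of_ne_zero hN.ne'
  obtain rfl : g = Matrix.of fun i j => _ := Matrix.ext hg
  have moments (i j : Fin (n + 1)) := integrableOn_pow_mul_PhiR_neg r ν0 ν i (a j)
  have weights (j : Fin (n + 1)) : IntegrableOn (PhiR r ν0 ν (-(a j))) (Set.Ioi 0) := by
    simpa using moments 0 j
  simp_rw [hP, mul_right_comm (Real.exp (-(a _))) (PhiR r ν0 ν _ _)]
  rw [integral_inv_sub_mul_sum hz weights]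
  refine (integral_prod_inv_sub_mul_density hz moments _).trans ?_
  rw [det_vecCons_div_det_moments_PhiR r ν0 ν hdist, Nat.add_sub_cancel, ← mul_assoc,
    div_eq_mul_inv]

/-- **Proposition 2.6(ii)** (average reciprocal characteristic polynomial for the
product ensemble, residue form). -/
theorem prop_2_6_ii (r ν0 N : ℕ) (hN : 0 < N) (ν : Fin r → ℕ) (a : Fin N → ℝ)
    (ha : ∀ j, 0 < a j) (hdist : Function.Injective a)
    (g : Matrix (Fin N) (Fin N) ℝ)
    (hg : ∀ i j, g i j = ∫ x in Set.Ioi (0 : ℝ), x ^ (i : ℕ) * PhiR r ν0 ν (-(a j)) x)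
    (hdet : g.det ≠ 0)
    (P : (Fin N → ℝ) → ℝ)
    (hP : ∀ x, P x = (1 / ((Nat.factorial N : ℝ) * g.det)) *
      (Matrix.of fun i j : Fin N => x j ^ (i : ℕ)).det *
      (Matrix.of fun i j : Fin N => PhiR r ν0 ν (-(a i)) (x j)).det)
    (z : ℂ) (hz : z.im ≠ 0) :
    ∫ x in {x : Fin N → ℝ | ∀ l, 0 < x l},
        (∏ l, (z - (x l : ℂ))⁻¹) * ((P x : ℝ) : ℂ) =
      ((-1 : ℂ) ^ (N - 1) / ∏ l, (Real.Gamma ((ν l : ℝ) + N) : ℂ)) *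
        ∫ t in Set.Ioi (0 : ℝ), (z - (t : ℂ))⁻¹ *
          ((∑ j, Real.exp (-(a j)) * PhiR r ν0 ν (-(a j)) t *
            ∏ l ∈ Finset.univ.erase j, (a l - a j)⁻¹ : ℝ) : ℂ) :=
  prop_2_6_ii_general r ν0 N hN ν a hdist g hg P hP z (.inr (by simpa using hz))

end
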